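/- (Theorem 4, inclusion S ⊆ optimal) Under the standing assumptions on the global optimization problem, assume the problem is solvable. Then every x̃ : Fin n → ℝ satisfying (x̃_j : EReal) ≤ x*_j(A,b) for all j with k_j = 0 and (x̃_j : EReal) = x*_j(A,b) for all j with k_j > 0 is a globally optimal solution: x̃ ∈ 𝒳 and F_i(x) ≥ F_i(x̃) for every x ∈ 𝒳 and every i. -/

import Mathlib

open scoped BigOperators

noncomputable section

/-- Max-plus product: `(A ⊗ x)_i = ⨆_j (A i j + x_j)` in `EReal`. -/
def maxPlus {m n : ℕ} (A : Matrix (Fin m) (Fin n) EReal) (x : Fin n → EReal)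
    (i : Fin m) : EReal :=
  ⨆ j, A i j + x j

/-- Auxiliary subtraction: `s(b,a) = +∞` if `a = -∞`, else `b - a`. -/
def sSub (b a : EReal) : EReal := if a = ⊥ then ⊤ else b - a

/-- Greatest subsolution `x*(A,b)_j = ⨅_i s(b_i, A i j)`. -/
def xstar {m n : ℕ} (A : Matrix (Fin m) (Fin n) EReal) (b : Fin m → EReal)
    (j : Fin n) : EReal :=
  ⨅ i, sSub (b i) (A i j)

/-- Objective function `F(x)_i = ⨆_j (A i j + x_j)` for real vectors `x`. -/
def objF {m n : ℕ} (A : Matrix (Fin m) (Fin n) EReal) (x : Fin n → ℝ)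
    (i : Fin m) : EReal :=
  ⨆ j, A i j + (x j : EReal)

/-- `J = {j | k_j > 0}` as a finite set. -/
def Jset {n : ℕ} (k : Fin n → ℝ) : Finset (Fin n) :=
  Finset.univ.filter (fun j => 0 < k j)

/-- Greatest lower bound `b_i = ((∑_{j ∈ J} k_j * A i j) + c) / (∑_{j ∈ J} k_j)`. -/
def glb {m n : ℕ} (A : Matrix (Fin m) (Fin n) EReal) (k : Fin n → ℝ) (c : ℝ)
    (i : Fin m) : EReal :=
  ((∑ j ∈ Jset k, (k j : EReal) * A i j) + (c : EReal)) /
    ((∑ j ∈ Jset k, k j : ℝ) : EReal)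

/-- `xt` is a globally optimal solution of the problem `(A, k, c)`. -/
def IsOptimal {m n : ℕ} (A : Matrix (Fin m) (Fin n) EReal) (k : Fin n → ℝ)
    (c : ℝ) (xt : Fin n → ℝ) : Prop :=
  (∑ j, k j * xt j = c) ∧
    ∀ x : Fin n → ℝ, (∑ j, k j * x j = c) → ∀ i, objF A xt i ≤ objF A x i

theorem glb_bot {m n : ℕ} (A : Matrix (Fin m) (Fin n) EReal) (k : Fin n → ℝ) (c : ℝ)
    (i : Fin m) (j : Fin n) (hj : 0 < k j) (h : A i j = ⊥) : glb A k c i = ⊥ := by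
  have hJ : j ∈ Jset k := by simp [Jset, hj]
  have hpos : 0 < ∑ j ∈ Jset k, k j :=
    Finset.sum_pos (fun t ht => by simpa [Jset] using ht) ⟨j, hJ⟩
  unfold glb
  rw [← Finset.add_sum_erase _ _ hJ, h, EReal.coe_mul_bot_of_pos hj, EReal.bot_add, EReal.bot_add]
  exact EReal.bot_div_of_pos_ne_top (by exact_mod_cast hpos) (EReal.coe_ne_top _)

theorem ereal_sum_coe {ι : Type*} (s : Finset ι) (f : ι → ℝ) :
    ∑ j ∈ s, (f j : EReal) = ((∑ j ∈ s, f j : ℝ) : EReal) := by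
  classical
  induction s using Finset.induction_on with
  | empty => simp
  | insert a s ha ih => rw [Finset.sum_insert ha, Finset.sum_insert ha, ih, EReal.coe_add]

theorem sum_Jset {n : ℕ} (k : Fin n → ℝ) (hk : ∀ j, 0 ≤ k j) (f : Fin n → ℝ) :
    ∑ j ∈ Jset k, k j * f j = ∑ j, k j * f j := by
  apply Finset.sum_subset (Finset.subset_univ _)
  intro j _ hj
  have : k j = 0 := le_antisymm (by simpa [Jset] using hj) (hk j)
  simp [this]

theorem glb_real {m n : ℕ} (A : Matrix (Fin m) (Fin n) EReal) (k : Fin n → ℝ)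
    (hk : ∀ j, 0 ≤ k j) (c : ℝ)
    (i : Fin m) (a : Fin n → ℝ) (h : ∀ j, 0 < k j → A i j = (a j : EReal)) :
    glb A k c i = (((∑ j, k j * a j + c) / ∑ j, k j : ℝ) : EReal) := by
  have h1 : ∑ j ∈ Jset k, (k j : EReal) * A i j = ((∑ j, k j * a j : ℝ) : EReal) := by
    rw [← sum_Jset k hk, ← ereal_sum_coe]
    refine Finset.sum_congr rfl fun j hj => ?_
    rw [h j (by simpa [Jset] using hj), EReal.coe_mul]
  have h2 : ∑ j ∈ Jset k, k j = ∑ j, k j := by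
    simpa using sum_Jset k hk (fun _ => 1)
  unfold glb
  rw [h1, h2, ← EReal.coe_add, EReal.coe_div]

theorem stmt_16 {m n : ℕ} (hm : 1 ≤ m) (hn : 1 ≤ n)
    (A : Matrix (Fin m) (Fin n) EReal) (hA : ∀ i j, A i j ≠ ⊤)
    (k : Fin n → ℝ) (hk : ∀ j, 0 ≤ k j) (hk0 : ∃ j, k j ≠ 0) (c : ℝ)
    (hrow : ∀ i, ∃ j, A i j ≠ ⊥)
    (hcol : ∀ j, (∀ i, A i j = ⊥) → 0 < k j)
    (hsolv : ∃ xt : Fin n → ℝ, IsOptimal A k c xt) :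
    ∀ xt : Fin n → ℝ,
      (∀ j, k j = 0 → (xt j : EReal) ≤ xstar A (glb A k c) j) →
      (∀ j, 0 < k j → (xt j : EReal) = xstar A (glb A k c) j) →
        IsOptimal A k c xt := by
  intro xt h0 h1
  obtain ⟨y, hyc, hyo⟩ := hsolv
  have hle : ∀ j, (xt j : EReal) ≤ xstar A (glb A k c) j := fun j => by
    rcases (hk j).lt_or_eq with h | h
    · exact (h1 j h).le
    · exact h0 j h.symm
  have hbb : ∀ i, glb A k c i ≠ ⊥ := by
    intro i hi
    obtain ⟨j, hj⟩ := hrow i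
    have h2 := (hle j).trans (iInf_le _ i)
    rw [sSub, if_neg hj, hi, EReal.bot_sub] at h2
    exact EReal.coe_ne_bot _ (le_bot_iff.1 h2)
  have hAJ : ∀ i j, 0 < k j → A i j = ((A i j).toReal : EReal) := fun i j hj =>
    (EReal.coe_toReal (hA i j) (fun h => hbb i (glb_bot A k c i j hj h))).symm
  set K := ∑ j, k j with hKdef
  have hK : 0 < K := by
    obtain ⟨j, hj⟩ := hk0
    exact Finset.sum_pos' (fun j _ => hk j) ⟨j, Finset.mem_univ _, lt_of_le_of_ne (hk j) hj.symm⟩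
  set a : Fin m → Fin n → ℝ := fun i j => (A i j).toReal with ha
  set b : Fin m → ℝ := fun i => (∑ j, k j * a i j + c) / K with hb
  have hglb : ∀ i, glb A k c i = (b i : EReal) := fun i =>
    glb_real A k hk c i (a i) (hAJ i)
  have hbK : ∀ i, K * b i = ∑ j, k j * a i j + c := fun i => by
    simp only [hb]; field_simp
  -- averaging
  have havg : ∀ (x : Fin n → ℝ) i (t : ℝ), (∀ j, A i j + (x j : EReal) ≤ (t : EReal)) →
      ∑ j, k j * a i j + ∑ j, k j * x j ≤ K * t := by
    intro x i t h
    rw [← Finset.sum_add_distrib, hKdef, Finset.sum_mul]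
    refine Finset.sum_le_sum fun j _ => ?_
    rcases (hk j).lt_or_eq with hj | hj
    · have h2 := h j
      rw [hAJ i j hj] at h2
      have h3 : a i j + x j ≤ t := by exact_mod_cast h2
      nlinarith
    · simp [← hj]
  have hFxt : ∀ i j, A i j + (xt j : EReal) ≤ (b i : EReal) := by
    intro i j
    by_cases hij : A i j = ⊥
    · simp [hij]
    · have h2 := (hle j).trans (iInf_le _ i)
      rw [sSub, if_neg hij, hglb, ← EReal.coe_toReal (hA i j) hij] at h2
      rw [← EReal.coe_toReal (hA i j) hij]
      have h3 : xt j ≤ b i - (A i j).toReal := by exact_mod_cast h2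
      have h4 : (A i j).toReal + xt j ≤ b i := by linarith
      exact_mod_cast h4
  have hlow : ∀ x : Fin n → ℝ, ∑ j, k j * x j = c → ∀ i, (b i : EReal) ≤ objF A x i := by
    intro x hx i
    by_contra hlt
    obtain ⟨t, ht1, ht2⟩ := EReal.lt_iff_exists_real_btwn.1 (not_le.1 hlt)
    have h2 := havg x i t (fun j => (le_iSup (fun j => A i j + (x j : EReal)) j).trans ht1.le)
    have h3 : t < b i := by exact_mod_cast ht2
    have := hbK i
    nlinarith
  have hFy : ∀ i, objF A y i ≤ (b i : EReal) := by
    intro i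
    refine (hyo (fun j => b i - a i j) ?_ i).trans (iSup_le fun j => ?_)
    · have : ∑ j, k j * (b i - a i j) = K * b i - ∑ j, k j * a i j := by
        rw [hKdef, Finset.sum_mul, ← Finset.sum_sub_distrib]
        exact Finset.sum_congr rfl fun j _ => by ring
      rw [this, hbK]; ring
    · by_cases hij : A i j = ⊥
      · simp [hij]
      · rw [← EReal.coe_toReal (hA i j) hij, ← EReal.coe_add]
        have : (A i j).toReal + (b i - a i j) ≤ b i := by simp [ha]
        exact_mod_cast this
  have hyle : ∀ j, (y j : EReal) ≤ xstar A (glb A k c) j := by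
    intro j
    refine le_iInf fun i => ?_
    unfold sSub
    split_ifs with hij
    · exact le_top
    · have h2 := (le_iSup (fun j => A i j + (y j : EReal)) j).trans (hFy i)
      rw [← EReal.coe_toReal (hA i j) hij] at h2
      rw [hglb, ← EReal.coe_toReal (hA i j) hij]
      have h3 : (A i j).toReal + y j ≤ b i := by exact_mod_cast h2
      have h4 : y j ≤ b i - (A i j).toReal := by linarith
      exact_mod_cast h4
  have hX : ∑ j, k j * xt j = c := by
    apply le_antisymm
    · have := havg xt ⟨0, hm⟩ _ (hFxt ⟨0, hm⟩)
      have := hbK ⟨0, hm⟩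
      linarith
    · rw [← hyc]
      refine Finset.sum_le_sum fun j _ => ?_
      rcases (hk j).lt_or_eq with hj | hj
      · have h2 := hyle j
        rw [← h1 j hj] at h2
        exact mul_le_mul_of_nonneg_left (by exact_mod_cast h2) (hk j)
      · simp [← hj]
  exact ⟨hX, fun x hx i => (iSup_le (hFxt i)).trans (hlow x hx i)⟩
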